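/- For every finite field F_q, every integer j ≥ 1, and every nonzero polynomial f ∈ F_q[T]: Σ'_{d|f} Λ_j(d) = (deg f)^j, where the primed sum runs over the monic divisors d of f; consequently 0 ≤ Λ_j(f) ≤ (deg f)^j. -/

import Mathlib

/-!
In the language of Dirichlet convolution over monic divisors the recursion reads
`Λ_{j+1} = Λ_j * Λ + Λ_j · deg`, and `Λ * 1 = deg` by unique factorization. Convolving with `1`,
`Λ_{j+1} * 1` sums `Λ_j(d) (deg (f / d) + deg d) = Λ_j(d) deg f` over `d ∣ f`, so every step
contributes a factor `deg f`. The pointwise bound keeps a single term of the sum, the one at the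
monic associate of `f`.
-/

open Polynomial

/-- The von Mangoldt function on `F_q[T]`: `Λ(f) = deg P` if `f = c·P^k` with `c ≠ 0`,
`P` monic irreducible and `k ≥ 1`, and `Λ(f) = 0` otherwise. -/
noncomputable def polyVM {F : Type*} [Field F] (f : F[X]) : ℕ :=
  sSup {m : ℕ | ∃ (c : F) (P : F[X]) (k : ℕ),
    c ≠ 0 ∧ P.Monic ∧ Irreducible P ∧ 1 ≤ k ∧ f = C c * P ^ k ∧ m = P.natDegree}

/- The higher-order von Mangoldt functions: `Λ_0(f) = 1` iff `f` is a nonzero constant,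
`Λ_1 = Λ`, and `Λ_j(f) = Σ'_{d ∣ f} Λ_{j-1}(d) Λ(f/d) + Λ_{j-1}(f)·deg f` for `j ≥ 2`,
the sum being over monic divisors `d` of `f`. -/
open Classical in
noncomputable def polyVMJ {F : Type*} [Field F] : ℕ → F[X] → ℕ
  | 0 => fun f => if f ≠ 0 ∧ f.natDegree = 0 then 1 else 0
  | 1 => fun f => polyVM f
  | (j + 2) => fun f =>
      (∑ᶠ d ∈ {d : F[X] | d.Monic ∧ d ∣ f}, polyVMJ (j + 1) d * polyVM (f / d))
        + polyVMJ (j + 1) f * f.natDegree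

section IsDomain

variable {R : Type*} [CommRing R] [IsDomain R] {P Q : R[X]} {k l : ℕ}

theorem natDegree_eq_of_associated (h : Associated P Q) : P.natDegree = Q.natDegree :=
  natDegree_eq_of_degree_eq (degree_eq_degree_of_associated h)

theorem eq_of_monic_prime_associated_pow (hP : P.Monic) (hQ : Q.Monic) (hPp : Prime P)
    (hQp : Prime Q) (hk : k ≠ 0) (h : Associated (P ^ k) (Q ^ l)) : P = Q :=
  eq_of_monic_of_associated hP hQ (h.of_pow_associated_of_prime hPp hQp (Nat.pos_of_ne_zero hk))

theorem eq_and_eq_of_monic_prime_pow_eq (hP : P.Monic) (hQ : Q.Monic) (hPp : Prime P)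
    (hQp : Prime Q) (hk : k ≠ 0) (h : P ^ k = Q ^ l) : P = Q ∧ k = l := by
  obtain rfl := eq_of_monic_prime_associated_pow hP hQ hPp hQp hk (.of_eq h)
  exact ⟨rfl, pow_injective_of_not_isUnit hPp.not_isUnit hPp.ne_zero h⟩

end IsDomain

section MonicDivisors

theorem finite_setOf_monic_dvd {R : Type*} [CommRing R] [UniqueFactorizationMonoid R] {f : R[X]}
    (hf : f ≠ 0) : {d : R[X] | d.Monic ∧ d ∣ f}.Finite :=
  have := fintypeSubtypeMonicDvd f hf
  Set.finite_coe_iff.mp (Finite.of_fintype {d : R[X] // d.Monic ∧ d ∣ f})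

variable {F : Type*} [Field F] {M : Type*} [AddCommMonoid M] {f d : F[X]}

open Classical in
/-- The monic divisors of a polynomial over a field, the range of the primed sums `Σ'_{d ∣ f}`.
Every monic polynomial divides `0`, so `0` gets the junk value `∅`, as for `Nat.divisors`. -/
noncomputable def monicDivisors (f : F[X]) : Finset F[X] :=
  if hf : f = 0 then ∅ else (finite_setOf_monic_dvd hf).toFinset

theorem mem_monicDivisors : d ∈ monicDivisors f ↔ (d.Monic ∧ d ∣ f) ∧ f ≠ 0 := by
  by_cases hf : f = 0 <;> simp [monicDivisors, hf]

theorem finsum_mem_monic_dvd (hf : f ≠ 0) (g : F[X] → M) :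
    ∑ᶠ d ∈ {d : F[X] | d.Monic ∧ d ∣ f}, g d = ∑ d ∈ monicDivisors f, g d :=
  finsum_mem_eq_sum_of_inter_support_eq g <| by
    congr 1
    ext d
    simp [mem_monicDivisors, hf]

theorem natDegree_div_add_natDegree (hf : f ≠ 0) (hd : d ∣ f) :
    (f / d).natDegree + d.natDegree = f.natDegree := by
  obtain ⟨e, rfl⟩ := hd
  obtain ⟨hd, he⟩ := mul_ne_zero_iff.mp hf
  rw [mul_div_cancel_left₀ e hd, natDegree_mul hd he, add_comm]

theorem sum_monicDivisors_comm (f : F[X]) (g : F[X] → F[X] → M) :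
    ∑ d ∈ monicDivisors f, ∑ e ∈ monicDivisors d, g e (d / e) =
      ∑ e ∈ monicDivisors f, ∑ h ∈ monicDivisors (f / e), g e h := by
  rw [Finset.sum_sigma', Finset.sum_sigma']
  refine Finset.sum_bij' (fun x _ => ⟨x.2, x.1 / x.2⟩) (fun x _ => ⟨x.1 * x.2, x.1⟩)
    ?_ ?_ ?_ ?_ fun _ _ => rfl
  · rintro ⟨d, e⟩ hde
    simp only [Finset.mem_sigma, mem_monicDivisors] at hde ⊢
    obtain ⟨⟨⟨hd, t, rfl⟩, hf⟩, ⟨he, s, rfl⟩, -⟩ := hde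
    rw [mul_assoc] at hf ⊢
    rw [mul_div_cancel_left₀ _ he.ne_zero, mul_div_cancel_left₀ _ he.ne_zero]
    exact ⟨⟨⟨he, dvd_mul_right _ _⟩, hf⟩, ⟨he.of_mul_monic_left hd, dvd_mul_right _ _⟩,
      right_ne_zero_of_mul hf⟩
  · rintro ⟨e, h⟩ heh
    simp only [Finset.mem_sigma, mem_monicDivisors] at heh ⊢
    obtain ⟨⟨⟨he, t, rfl⟩, hf⟩, ⟨hh, hdvd⟩, -⟩ := heh
    rw [mul_div_cancel_left₀ _ he.ne_zero] at hdvd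
    exact ⟨⟨⟨he.mul hh, mul_dvd_mul_left e hdvd⟩, hf⟩, ⟨he, dvd_mul_right _ _⟩,
      (he.mul hh).ne_zero⟩
  · rintro ⟨d, e⟩ hde
    simp only [Finset.mem_sigma, mem_monicDivisors] at hde
    obtain ⟨-, ⟨he, s, rfl⟩, -⟩ := hde
    simp [mul_div_cancel_left₀ _ he.ne_zero]
  · rintro ⟨e, h⟩ heh
    simp only [Finset.mem_sigma, mem_monicDivisors] at heh
    simp [mul_div_cancel_left₀ _ heh.1.1.1.ne_zero]

end MonicDivisors

section PrimePowers

variable {F : Type*} [Field F] {f P : F[X]} {k : ℕ}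

theorem exists_monic_irreducible_pow_eq (hf : f.Monic) (h : IsPrimePow f) :
    ∃ (P : F[X]) (k : ℕ), P.Monic ∧ Irreducible P ∧ k ≠ 0 ∧ P ^ k = f := by
  classical
  obtain ⟨p, k, hp, hk, rfl⟩ := h
  exact ⟨normalize p, k, monic_normalize hp.ne_zero,
    (normalize_associated p).irreducible_iff.mpr hp.irreducible, hk.ne',
    eq_of_monic_of_associated ((monic_normalize hp.ne_zero).pow k) hf
      (normalize_associated p).pow_pow⟩

open UniqueFactorizationMonoid

variable [DecidableEq F]

theorem mem_normalizedFactors_and_le_count_iff (hf : f ≠ 0) :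
    P ∈ normalizedFactors f ∧ k ≠ 0 ∧ k ≤ (normalizedFactors f).count P ↔
      P.Monic ∧ Irreducible P ∧ k ≠ 0 ∧ P ^ k ∣ f := by
  have hcount (hP : P.Monic) (hPi : Irreducible P) :
      P ^ k ∣ f ↔ k ≤ (normalizedFactors f).count P := by
    rw [pow_dvd_iff_le_emultiplicity, emultiplicity_eq_count_normalizedFactors hPi hf,
      hP.normalize_eq_self, Nat.cast_le]
  rw [Polynomial.mem_normalizedFactors_iff hf]
  constructor
  · rintro ⟨⟨hPi, hP, -⟩, hk, hle⟩
    exact ⟨hP, hPi, hk, (hcount hP hPi).mpr hle⟩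
  · rintro ⟨hP, hPi, hk, hdvd⟩
    exact ⟨⟨hPi, hP, (dvd_pow_self P hk).trans hdvd⟩, hk, (hcount hP hPi).mp hdvd⟩

theorem natDegree_eq_sum_normalizedFactors (hf : f ≠ 0) :
    f.natDegree =
      ∑ P ∈ (normalizedFactors f).toFinset, (normalizedFactors f).count P * P.natDegree := by
  rw [← natDegree_eq_of_associated (prod_normalizedFactors hf),
    natDegree_multiset_prod _ (zero_notMem_normalizedFactors f), Finset.sum_multiset_map_count]
  simp only [smul_eq_mul]

theorem sum_monicDivisors_eq_sum_primePow {M : Type*} [AddCommMonoid M] (hf : f ≠ 0)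
    {g : F[X] → M} (hg : ∀ d : F[X], d.Monic → ¬IsPrimePow d → g d = 0) :
    ∑ d ∈ monicDivisors f, g d =
      ∑ P ∈ (normalizedFactors f).toFinset,
        ∑ k ∈ Finset.Icc 1 ((normalizedFactors f).count P), g (P ^ k) := by
  have hmem (P : F[X]) (k : ℕ) :
      (⟨P, k⟩ : Σ _ : F[X], ℕ) ∈ (normalizedFactors f).toFinset.sigma
          (fun P => Finset.Icc 1 ((normalizedFactors f).count P)) ↔
        P.Monic ∧ Irreducible P ∧ k ≠ 0 ∧ P ^ k ∣ f := by
    simp only [Finset.mem_sigma, Multiset.mem_toFinset, Finset.mem_Icc, Nat.one_le_iff_ne_zero]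
    exact mem_normalizedFactors_and_le_count_iff hf
  rw [Finset.sum_sigma']
  symm
  refine Finset.sum_of_injOn (fun x => x.1 ^ x.2) ?_ ?_ ?_ fun _ _ => rfl
  · rintro ⟨P, k⟩ hPk ⟨Q, l⟩ hQl h
    obtain ⟨hP, hPi, hk, -⟩ := (hmem P k).mp hPk
    obtain ⟨hQ, hQi, -, -⟩ := (hmem Q l).mp hQl
    obtain ⟨rfl, rfl⟩ := eq_and_eq_of_monic_prime_pow_eq hP hQ hPi.prime hQi.prime hk h
    rfl
  · rintro ⟨P, k⟩ hPk
    obtain ⟨hP, -, -, hdvd⟩ := (hmem P k).mp hPk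
    exact mem_monicDivisors.mpr ⟨⟨hP.pow k, hdvd⟩, hf⟩
  · intro d hd hnot
    obtain ⟨⟨hd, hdvd⟩, -⟩ := mem_monicDivisors.mp hd
    refine hg d hd fun hpow => hnot ?_
    obtain ⟨P, k, hP, hPi, hk, rfl⟩ := exists_monic_irreducible_pow_eq hd hpow
    exact ⟨⟨P, k⟩, (hmem P k).mpr ⟨hP, hPi, hk, hdvd⟩, rfl⟩

end PrimePowers

section VonMangoldt

variable {F : Type*} [Field F] {f g P : F[X]} {k : ℕ}

theorem associated_iff_exists_eq_C_mul : Associated f g ↔ ∃ c : F, c ≠ 0 ∧ f = C c * g := by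
  constructor
  · intro h
    obtain ⟨u, rfl⟩ := h.symm
    obtain ⟨c, hc, hcu⟩ := isUnit_iff.mp u.isUnit
    exact ⟨c, hc.ne_zero, by rw [hcu, mul_comm]⟩
  · rintro ⟨c, hc, rfl⟩
    exact associated_unit_mul_left g (C c) (isUnit_C.mpr hc.isUnit)

theorem polyVM_eq_sSup (f : F[X]) :
    polyVM f = sSup {m : ℕ | ∃ (P : F[X]) (k : ℕ),
      P.Monic ∧ Irreducible P ∧ 1 ≤ k ∧ Associated f (P ^ k) ∧ m = P.natDegree} := by
  simp only [polyVM, associated_iff_exists_eq_C_mul]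
  congr! 3
  grind

theorem polyVM_eq_of_associated (h : Associated f g) : polyVM f = polyVM g := by
  have hiff (Q : F[X]) : Associated f Q ↔ Associated g Q := ⟨h.symm.trans, h.trans⟩
  simp only [polyVM_eq_sSup, hiff]

theorem polyVM_pow (hP : P.Monic) (hPi : Irreducible P) (hk : k ≠ 0) :
    polyVM (P ^ k) = P.natDegree := by
  rw [polyVM_eq_sSup]
  convert! csSup_singleton P.natDegree
  ext m
  constructor
  · rintro ⟨Q, l, hQ, hQi, -, hPQ, rfl⟩
    rw [eq_of_monic_prime_associated_pow hP hQ hPi.prime hQi.prime hk hPQ]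
    rfl
  · rintro rfl
    exact ⟨P, k, hP, hPi, Nat.one_le_iff_ne_zero.mpr hk, .refl _, rfl⟩

theorem polyVM_eq_zero_of_not_isPrimePow (hf : f.Monic) (h : ¬IsPrimePow f) : polyVM f = 0 := by
  rw [polyVM_eq_sSup]
  convert! csSup_empty
  refine Set.eq_empty_of_forall_notMem ?_
  rintro m ⟨P, k, hP, hPi, hk, hfP, -⟩
  exact h ⟨P, k, hPi.prime, hk, (eq_of_monic_of_associated hf (hP.pow k) hfP).symm⟩

open UniqueFactorizationMonoid in
theorem sum_monicDivisors_polyVM (hf : f ≠ 0) :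
    ∑ d ∈ monicDivisors f, polyVM d = f.natDegree := by
  classical
  rw [sum_monicDivisors_eq_sum_primePow hf fun _ => polyVM_eq_zero_of_not_isPrimePow,
    natDegree_eq_sum_normalizedFactors hf]
  refine Finset.sum_congr rfl fun P hP => ?_
  obtain ⟨hPi, hPm, -⟩ :=
    (Polynomial.mem_normalizedFactors_iff hf).mp (Multiset.mem_toFinset.mp hP)
  have hconst : ∀ k ∈ Finset.Icc 1 ((normalizedFactors f).count P),
      polyVM (P ^ k) = P.natDegree := fun k hk =>
    polyVM_pow hPm hPi (Nat.one_le_iff_ne_zero.mp (Finset.mem_Icc.mp hk).1)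
  simp [Finset.sum_congr rfl hconst]

end VonMangoldt

section HigherVonMangoldt

variable {F : Type*} [Field F] {f g : F[X]}

theorem polyVMJ_eq_of_associated (h : Associated f g) : ∀ j, polyVMJ j f = polyVMJ j g
  | 0 => by
    have hiff : f ≠ 0 ∧ f.natDegree = 0 ↔ g ≠ 0 ∧ g.natDegree = 0 := by
      rw [h.ne_zero_iff, natDegree_eq_of_associated h]
    simp only [polyVMJ]
    congr! 1
  | 1 => polyVM_eq_of_associated h
  | j + 2 => by
    have hdiv {d : F[X]} (hd : d ∣ f) : Associated (f / d) (g / d) := by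
      obtain ⟨u, rfl⟩ := h
      rw [mul_comm, EuclideanDomain.mul_div_assoc _ hd]
      exact (associated_unit_mul_left _ _ u.isUnit).symm
    simp only [polyVMJ, ← h.dvd_iff_dvd_right, polyVMJ_eq_of_associated h (j + 1),
      natDegree_eq_of_associated h]
    congr 1
    exact finsum_mem_congr rfl fun d hd => by rw [polyVM_eq_of_associated (hdiv hd.2)]

theorem polyVMJ_succ {j : ℕ} (hj : 1 ≤ j) (hf : f ≠ 0) :
    polyVMJ (j + 1) f =
      ∑ d ∈ monicDivisors f, polyVMJ j d * polyVM (f / d) + polyVMJ j f * f.natDegree := by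
  obtain ⟨i, rfl⟩ := Nat.exists_eq_add_of_le' hj
  rw [← finsum_mem_monic_dvd hf, polyVMJ]

theorem sum_monicDivisors_polyVMJ_succ {j : ℕ} (hj : 1 ≤ j) (hf : f ≠ 0) :
    ∑ d ∈ monicDivisors f, polyVMJ (j + 1) d =
      (∑ d ∈ monicDivisors f, polyVMJ j d) * f.natDegree :=
  calc
    ∑ d ∈ monicDivisors f, polyVMJ (j + 1) d
    _ = ∑ d ∈ monicDivisors f, (∑ e ∈ monicDivisors d, polyVMJ j e * polyVM (d / e) +
          polyVMJ j d * d.natDegree) :=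
      Finset.sum_congr rfl fun d hd => polyVMJ_succ hj (mem_monicDivisors.mp hd).1.1.ne_zero
    _ = ∑ d ∈ monicDivisors f, (∑ e ∈ monicDivisors (f / d), polyVMJ j d * polyVM e +
          polyVMJ j d * d.natDegree) := by
      rw [Finset.sum_add_distrib, sum_monicDivisors_comm f fun e h => polyVMJ j e * polyVM h,
        ← Finset.sum_add_distrib]
    _ = ∑ d ∈ monicDivisors f, polyVMJ j d * f.natDegree := by
      refine Finset.sum_congr rfl fun d hd => ?_
      have hdf : d ∣ f := (mem_monicDivisors.mp hd).1.2
      have hquot : f / d ≠ 0 := ne_zero_of_dvd_ne_zero hf (EuclideanDomain.div_dvd_of_dvd hdf)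
      rw [← Finset.mul_sum, sum_monicDivisors_polyVM hquot, ← mul_add,
        natDegree_div_add_natDegree hf hdf]
    _ = (∑ d ∈ monicDivisors f, polyVMJ j d) * f.natDegree := (Finset.sum_mul ..).symm

theorem sum_monicDivisors_polyVMJ {j : ℕ} (hj : 1 ≤ j) (hf : f ≠ 0) :
    ∑ d ∈ monicDivisors f, polyVMJ j d = f.natDegree ^ j := by
  induction j, hj using Nat.le_induction with
  | base => simpa [polyVMJ] using sum_monicDivisors_polyVM hf
  | succ j hj ih => rw [sum_monicDivisors_polyVMJ_succ hj hf, ih, pow_succ]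

theorem polyVMJ_le_sum_monicDivisors (j : ℕ) (hf : f ≠ 0) :
    polyVMJ j f ≤ ∑ d ∈ monicDivisors f, polyVMJ j d := by
  classical
  have hmem : normalize f ∈ monicDivisors f :=
    mem_monicDivisors.mpr ⟨⟨monic_normalize hf, normalize_dvd_iff.mpr dvd_rfl⟩, hf⟩
  rw [polyVMJ_eq_of_associated (normalize_associated f).symm j]
  exact Finset.single_le_sum (f := polyVMJ j) (fun _ _ => Nat.zero_le _) hmem

end HigherVonMangoldt

/-- `Σ'_{d ∣ f} Λ_j(d) = (deg f)^j` (the sum over monic divisors of `f`), and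
consequently `0 ≤ Λ_j(f) ≤ (deg f)^j` (equation (1.9) of Rodgers,
"The covariance of almost-primes in F_q[T]"). -/
theorem sum_vonMangoldt_divisors_eq {F : Type*} [Field F]
    (j : ℕ) (hj : 1 ≤ j) (f : F[X]) (hf : f ≠ 0) :
    (∑ᶠ d ∈ {d : F[X] | d.Monic ∧ d ∣ f}, polyVMJ j d) = f.natDegree ^ j
      ∧ polyVMJ j f ≤ f.natDegree ^ j := by
  have hsum := sum_monicDivisors_polyVMJ hj hf
  exact ⟨(finsum_mem_monic_dvd hf _).trans hsum, (polyVMJ_le_sum_monicDivisors j hf).trans_eq hsum⟩
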